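/- arXiv:1506.06922 — 4 statements merged into one kernel-verified Lean document; each statement's English description precedes it below -/
import Mathlib

section
/- A continuous function f : (0,∞) → (0,∞) is operator monotone decreasing if and only if f is decreasing on (0,∞) and f(A ! B) ≥ f(A) ! f(B) for every n ∈ ℕ and all n×n positive definite complex matrices A, B. -/
open Matrix
open scoped ComplexOrder

/-- The Loewner order on matrices: `A ≤ B` iff `B - A` is positive semidefinite. -/
def MLE {n : ℕ} (A B : Matrix (Fin n) (Fin n) ℂ) : Prop := (B - A).PosSemidef

/-- The `t`-weighted harmonic mean `A !_t B = ((1-t)A⁻¹ + tB⁻¹)⁻¹`. -/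
noncomputable def wharm {n : ℕ} (t : ℝ) (A B : Matrix (Fin n) (Fin n) ℂ) :
    Matrix (Fin n) (Fin n) ℂ := ((1 - t) • A⁻¹ + t • B⁻¹)⁻¹

/-- The `t`-weighted arithmetic mean `A ∇_t B = (1-t)A + tB`. -/
noncomputable def warith {n : ℕ} (t : ℝ) (A B : Matrix (Fin n) (Fin n) ℂ) :
    Matrix (Fin n) (Fin n) ℂ := (1 - t) • A + t • B

/-- Real powers of a matrix, via the continuous functional calculus. -/
noncomputable def mpow {n : ℕ} (A : Matrix (Fin n) (Fin n) ℂ) (r : ℝ) :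
    Matrix (Fin n) (Fin n) ℂ := cfc (fun x : ℝ => x ^ r) A

/-- The `t`-weighted geometric mean `A #_t B = A^{1/2} (A^{-1/2} B A^{-1/2})^t A^{1/2}`. -/
noncomputable def wgeom {n : ℕ} (t : ℝ) (A B : Matrix (Fin n) (Fin n) ℂ) :
    Matrix (Fin n) (Fin n) ℂ :=
  mpow A (1/2) * mpow (mpow A (-(1/2)) * B * mpow A (-(1/2))) t * mpow A (1/2)

/-- `f` is operator monotone (increasing): order preserving on positive definite
matrices of every size, via the continuous functional calculus. -/
def OperatorMonotone (f : ℝ → ℝ) : Prop :=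
  ∀ (n : ℕ) (A B : Matrix (Fin n) (Fin n) ℂ), A.PosDef → B.PosDef →
    MLE A B → MLE (cfc f A) (cfc f B)

/-- `f` is operator monotone decreasing: order reversing on positive definite
matrices of every size, via the continuous functional calculus. -/
def OperatorAntitone (f : ℝ → ℝ) : Prop :=
  ∀ (n : ℕ) (A B : Matrix (Fin n) (Fin n) ℂ), A.PosDef → B.PosDef →
    MLE A B → MLE (cfc f B) (cfc f A)

/-!
For positive `f` put `g x = (f x⁻¹)⁻¹`. Since inversion reverses the Loewner order and turns the
harmonic mean into the arithmetic one, `f` is operator monotone decreasing iff `g` is, and the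
harmonic-mean inequality for `f` says exactly that `g` is midpoint operator convex. It remains to
see that a real function `h` on `(0, ∞)` is operator monotone decreasing iff it is decreasing and
midpoint operator convex.

* If `h` is operator monotone decreasing, `V` is an isometry and `D` is positive definite, then `D`
  is dominated by a matrix that leaves the range of `V` invariant and restricts to
  `Vᴴ * D * V + ε` there. Hence `h (Vᴴ * D * V + ε) ≤ Vᴴ * h D * V`, and taking `D` block diagonal
  yields convexity up to `ε`. On scalars this already forces `h` to be continuous, so `ε` can be
  sent to `0`.
* Conversely, if `A ≤ B`, then iterating convexity on the ray from `A` through `B` gives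
  `h B ≤ (1 - 2⁻ᵏ) h A + 2⁻ᵏ h (A + 2ᵏ (B - A))`, and the last argument of `h` stays above `A`,
  where the decreasing function `h` is bounded above.
-/

section PositiveDefinite

open scoped MatrixOrder

variable {m n 𝕜 : Type*} [RCLike 𝕜]

lemma posDef_of_posDef_of_le {A B : Matrix n n 𝕜} (hA : A.PosDef) (hAB : A ≤ B) : B.PosDef := by
  simpa using hA.add_posSemidef (le_iff.1 hAB)

lemma posDef_fromBlocks_zero [Finite m] [Finite n] {A : Matrix m m 𝕜} {B : Matrix n n 𝕜}
    (hA : A.PosDef) (hB : B.PosDef) : (fromBlocks A 0 0 B).PosDef := by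
  classical
  have := Fintype.ofFinite m
  have := Fintype.ofFinite n
  have := hA.isUnit.invertible
  have posSemidef : (fromBlocks A 0 0 B).PosSemidef := by
    simpa [hB.posSemidef] using PosDef.fromBlocks₁₁ (0 : Matrix m n 𝕜) B hA
  exact posSemidef.posDef_iff_isUnit.2 (isUnit_fromBlocks_zero₂₁.2 ⟨hA.isUnit, hB.isUnit⟩)

variable [Fintype m] [Fintype n] [DecidableEq n]

lemma exists_le_mul_eq_mul_compression_add {V : Matrix m n 𝕜} (hV : Vᴴ * V = 1)
    {D : Matrix m m 𝕜} (hD : D.IsHermitian) {ε : ℝ} (hε : 0 < ε) :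
    ∃ E, D ≤ E ∧ E * V = V * (Vᴴ * D * V + ε • 1) := by
  -- `S` is chosen so that `ε⁻¹ • S * Sᴴ` maps `V` to `S`, cancelling the part of `D * V` off the
  -- range of `V`.
  let S := ε • V - (D * V - V * (Vᴴ * D * V))
  have S_mul_V : Sᴴ * V = ε • 1 := by
    simp [S, hD.eq, Matrix.sub_mul, Matrix.mul_assoc, hV]
  refine ⟨D + ε⁻¹ • (S * Sᴴ), ?_, ?_⟩
  · rw [le_iff, add_sub_cancel_left]
    exact (posSemidef_self_mul_conjTranspose S).smul (inv_pos.2 hε).le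
  · calc (D + ε⁻¹ • (S * Sᴴ)) * V = D * V + S := by
          simp [Matrix.add_mul, Matrix.mul_assoc, S_mul_V, smul_smul, hε.ne']
      _ = V * (Vᴴ * D * V) + ε • V := by simp only [S]; abel
      _ = V * (Vᴴ * D * V + ε • 1) := by simp [Matrix.mul_add]

lemma inv_inv_of_posDef {A : Matrix n n 𝕜} (hA : A.PosDef) : A⁻¹⁻¹ = A :=
  nonsing_inv_nonsing_inv A ((isUnit_iff_isUnit_det A).1 hA.isUnit)

lemma posDef_algebraMap {x : ℝ} (hx : 0 < x) : (algebraMap ℝ (Matrix n n 𝕜) x).PosDef :=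
  isStrictlyPositive_iff_posDef.1 (isStrictlyPositive_algebraMap hx)

end PositiveDefinite

section FunctionalCalculus

open scoped MatrixOrder

variable {m n 𝕜 : Type*} [Fintype m] [DecidableEq m] [Fintype n] [DecidableEq n] [RCLike 𝕜]

lemma continuousOn_real_spectrum (A : Matrix n n 𝕜) (f : ℝ → ℝ) :
    ContinuousOn f (spectrum ℝ A) :=
  A.finite_real_spectrum.continuousOn f

lemma spectrum_pos_of_posDef {A : Matrix n n 𝕜} (hA : A.PosDef) {x : ℝ}
    (hx : x ∈ spectrum ℝ A) : 0 < x :=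
  (isStrictlyPositive_iff_posDef.2 hA).spectrum_pos hx

lemma posDef_cfc {A : Matrix n n 𝕜} (hA : A.PosDef) {f : ℝ → ℝ} (hf : ∀ x, 0 < x → 0 < f x) :
    (cfc f A).PosDef := by
  rw [← isStrictlyPositive_iff_posDef,
    cfc_isStrictlyPositive_iff f A (continuousOn_real_spectrum A f) hA.isHermitian.isSelfAdjoint]
  exact fun x hx ↦ hf x (spectrum_pos_of_posDef hA hx)

lemma cfc_inv_eq_inv_cfc {A : Matrix n n 𝕜} (hA : A.PosDef) {f : ℝ → ℝ}
    (hf : ∀ x, 0 < x → f x ≠ 0) : cfc (fun x ↦ (f x)⁻¹) A = (cfc f A)⁻¹ := by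
  rw [nonsing_inv_eq_ringInverse]
  exact cfc_inv f A (fun x hx ↦ hf x (spectrum_pos_of_posDef hA hx))
    (continuousOn_real_spectrum A f) hA.isHermitian.isSelfAdjoint

lemma cfc_comp_inv_eq_cfc_inv {A : Matrix n n 𝕜} (hA : A.PosDef) (f : ℝ → ℝ) :
    cfc (fun x ↦ f x⁻¹) A = cfc f A⁻¹ := by
  lift A to (Matrix n n 𝕜)ˣ using hA.isUnit
  rw [← coe_units_inv]
  exact cfc_comp_inv f A ((finite_real_spectrum.image _).continuousOn f)
    hA.isHermitian.isSelfAdjoint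

lemma cfc_mul_eq_mul_cfc {A : Matrix m m 𝕜} {B : Matrix n n 𝕜} (hA : A.IsHermitian)
    (hB : B.IsHermitian) {V : Matrix m n 𝕜} (h : A * V = V * B) (f : ℝ → ℝ) :
    cfc f A * V = V * cfc f B := by
  have hfin := A.finite_real_spectrum.union B.finite_real_spectrum
  let p : Polynomial ℝ := Lagrange.interpolate hfin.toFinset id f
  have eval_p : ∀ x ∈ spectrum ℝ A ∪ spectrum ℝ B, f x = p.eval x := fun x hx ↦
    (Lagrange.eval_interpolate_at_node (v := id) f Function.injective_id.injOn
      (hfin.mem_toFinset.2 hx)).symm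
  have cfc_A : cfc f A = p.aeval A := by
    rw [← cfc_polynomial p A hA.isSelfAdjoint]
    exact cfc_congr fun x hx ↦ eval_p x (.inl hx)
  have cfc_B : cfc f B = p.aeval B := by
    rw [← cfc_polynomial p B hB.isSelfAdjoint]
    exact cfc_congr fun x hx ↦ eval_p x (.inr hx)
  have pow_intertwine (k : ℕ) : A ^ k * V = V * B ^ k := by
    induction k with
    | zero => simp
    | succ k ih => rw [pow_succ, Matrix.mul_assoc, h, ← Matrix.mul_assoc, ih, Matrix.mul_assoc,
        ← pow_succ]
  simp only [cfc_A, cfc_B, Polynomial.aeval_eq_sum_range, Matrix.sum_mul, Matrix.mul_sum,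
    Matrix.smul_mul, Matrix.mul_smul, pow_intertwine]

lemma cfc_submatrix (e : m ≃ n) {A : Matrix n n 𝕜} (hA : A.IsHermitian) (f : ℝ → ℝ) :
    cfc f (A.submatrix e e) = (cfc f A).submatrix e e := by
  let P : Matrix m n 𝕜 := (1 : Matrix n n 𝕜).submatrix e id
  have mul_P (M : Matrix n n 𝕜) : M.submatrix e e * P = P * M := by
    rw [submatrix_mul_equiv, Matrix.mul_one]
    ext i j
    simp [P, Matrix.mul_apply, one_apply]
  have P_mul_conjTranspose : P * Pᴴ = 1 := by
    ext i j
    simp [P, Matrix.mul_apply, one_apply]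
  calc cfc f (A.submatrix e e) = cfc f (A.submatrix e e) * P * Pᴴ := by
        rw [Matrix.mul_assoc, P_mul_conjTranspose, Matrix.mul_one]
    _ = (cfc f A).submatrix e e * P * Pᴴ := by
        rw [cfc_mul_eq_mul_cfc (hA.submatrix e) hA (mul_P A), mul_P]
    _ = (cfc f A).submatrix e e := by
        rw [Matrix.mul_assoc, P_mul_conjTranspose, Matrix.mul_one]

lemma cfc_fromBlocks_zero {A : Matrix m m 𝕜} {B : Matrix n n 𝕜} (hA : A.IsHermitian)
    (hB : B.IsHermitian) (f : ℝ → ℝ) :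
    cfc f (fromBlocks A 0 0 B) = fromBlocks (cfc f A) 0 0 (cfc f B) := by
  have hD : (fromBlocks A 0 0 B).IsHermitian := hA.fromBlocks (by simp) hB
  let inl : Matrix (m ⊕ n) m 𝕜 := fromRows 1 0
  let inr : Matrix (m ⊕ n) n 𝕜 := fromRows 0 1
  have cfc_mul_inl : cfc f (fromBlocks A 0 0 B) * inl = inl * cfc f A :=
    cfc_mul_eq_mul_cfc hD hA (by simp [inl, fromBlocks_mul_fromRows, fromRows_mul]) f
  have cfc_mul_inr : cfc f (fromBlocks A 0 0 B) * inr = inr * cfc f B :=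
    cfc_mul_eq_mul_cfc hD hB (by simp [inr, fromBlocks_mul_fromRows, fromRows_mul]) f
  calc cfc f (fromBlocks A 0 0 B)
      = cfc f (fromBlocks A 0 0 B) * fromCols inl inr := by
        rw [fromCols_fromRows_eq_fromBlocks, fromBlocks_one, Matrix.mul_one]
    _ = fromCols (fromRows (cfc f A) 0) (fromRows 0 (cfc f B)) := by
        rw [mul_fromCols, cfc_mul_inl, cfc_mul_inr]
        simp [inl, inr, fromRows_mul]
    _ = fromBlocks (cfc f A) 0 0 (cfc f B) := fromCols_fromRows_eq_fromBlocks ..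

end FunctionalCalculus

section Continuity

open Set

variable {h : ℝ → ℝ} {a : ℝ}

lemma exists_lt_lt_sub_lt_of_approx_midpoint_convex (anti : AntitoneOn h (Ioi a))
    (convex : ∀ x > a, ∀ y > a, ∀ ε > 0, h ((x + y) / 2 + ε) ≤ (h x + h y) / 2) {z : ℝ}
    (hz : a < z) {η : ℝ} (hη : 0 < η) : ∃ x y, a < x ∧ x < z ∧ z < y ∧ h x - h y < η := by
  -- A jump at `z` would contradict convexity between a point just left of `z` and one just right of
  -- it, whose midpoint lies to the left.
  let leftValues := image h (Ioo a z)
  have bddBelow : BddBelow leftValues :=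
    ⟨h z, forall_mem_image.2 fun x hx ↦ anti hx.1 hz hx.2.le⟩
  obtain ⟨_, ⟨x, ⟨hax, hxz⟩, rfl⟩, hx_lt⟩ : ∃ v ∈ leftValues, v < sInf leftValues + η / 2 :=
    exists_lt_of_csInf_lt ((nonempty_Ioo.2 hz).image h) (lt_add_of_pos_right _ (half_pos hη))
  let t := (z - x) / 3
  have ht : 0 < t := by simp only [t]; linarith
  have hx_t : x = z - 3 * t := by simp only [t]; ring
  have sInf_le : sInf leftValues ≤ h (z - t / 2) :=
    csInf_le bddBelow (mem_image_of_mem h ⟨by linarith, by linarith⟩)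
  have convex_t : h (z - t / 2) ≤ (h x + h (z + t)) / 2 := by
    convert convex x hax (z + t) (by linarith) (t / 2) (half_pos ht) using 2
    rw [hx_t]; ring
  exact ⟨x, z + t, hax, hxz, by linarith, by linarith⟩

lemma continuousOn_of_antitoneOn_of_approx_midpoint_convex (anti : AntitoneOn h (Ioi a))
    (convex : ∀ x > a, ∀ y > a, ∀ ε > 0, h ((x + y) / 2 + ε) ≤ (h x + h y) / 2) :
    ContinuousOn h (Ioi a) := by
  refine fun z hz ↦ ContinuousAt.continuousWithinAt (Metric.continuousAt_iff'.2 fun η hη ↦ ?_)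
  obtain ⟨x, y, hax, hxz, hzy, hη_lt⟩ :=
    exists_lt_lt_sub_lt_of_approx_midpoint_convex anti convex hz hη
  filter_upwards [Ioo_mem_nhds hxz hzy] with w ⟨hxw, hwy⟩
  have hw : a < w := hax.trans hxw
  have hy : a < y := hw.trans hwy
  rw [Real.dist_eq, abs_sub_lt_iff]
  constructor
  · linarith [anti hax hw hxw.le, anti hz hy hzy.le]
  · linarith [anti hax hz hxz.le, anti hw hy hwy.le]

end Continuity

/-- Operator convexity on `(0, ∞)` at midpoints, for positive definite matrices of every size. No
continuity is part of the definition. -/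
def OperatorMidpointConvex (h : ℝ → ℝ) : Prop :=
  ∀ (n : ℕ) (A B : Matrix (Fin n) (Fin n) ℂ), A.PosDef → B.PosDef →
    MLE (cfc h (warith 2⁻¹ A B)) (warith 2⁻¹ (cfc h A) (cfc h B))

section OperatorAntitone

open scoped MatrixOrder Matrix.Norms.L2Operator
open Set Filter Topology

variable {m n : Type*} [Fintype m] [DecidableEq m] [Fintype n] [DecidableEq n] {h : ℝ → ℝ}

-- `MLE A B` is by definition the order `A ≤ B` of the scope `MatrixOrder`, and is used as such from
-- here on.
lemma OperatorAntitone.cfc_le_cfc (hh : OperatorAntitone h) {A B : Matrix n n ℂ} (hA : A.PosDef)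
    (hAB : A ≤ B) : cfc h B ≤ cfc h A := by
  have hB := posDef_of_posDef_of_le hA hAB
  let e := (Fintype.equivFin n).symm
  have key := hh _ (A.submatrix e e) (B.submatrix e e) (hA.submatrix e.injective)
    (hB.submatrix e.injective) ((posSemidef_submatrix_equiv e).2 hAB)
  rw [cfc_submatrix e hA.isHermitian, cfc_submatrix e hB.isHermitian] at key
  exact (posSemidef_submatrix_equiv e).1 key

lemma OperatorAntitone.cfc_compression_add_le (hh : OperatorAntitone h) {V : Matrix m n ℂ}
    (hV : Vᴴ * V = 1) {D : Matrix m m ℂ} (hD : D.PosDef) {ε : ℝ} (hε : 0 < ε) :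
    cfc h (Vᴴ * D * V + ε • 1) ≤ Vᴴ * cfc h D * V := by
  obtain ⟨E, D_le_E, E_mul_V⟩ := exists_le_mul_eq_mul_compression_add hV hD.isHermitian hε
  have hE : E.IsHermitian := (posDef_of_posDef_of_le hD D_le_E).isHermitian
  have hC : (Vᴴ * D * V + ε • 1).IsHermitian :=
    (isHermitian_conjTranspose_mul_mul V hD.isHermitian).add (isHermitian_one.smul (.all ε))
  calc cfc h (Vᴴ * D * V + ε • 1)
      = Vᴴ * cfc h E * V := by
        rw [Matrix.mul_assoc Vᴴ (cfc h E), cfc_mul_eq_mul_cfc hE hC E_mul_V,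
          ← Matrix.mul_assoc Vᴴ V, hV, Matrix.one_mul]
    _ ≤ Vᴴ * cfc h D * V := by
        rw [le_iff, ← Matrix.sub_mul, ← Matrix.mul_sub]
        exact PosSemidef.conjTranspose_mul_mul_same (hh.cfc_le_cfc hD D_le_E) V

lemma OperatorAntitone.cfc_convexCombination_add_le (hh : OperatorAntitone h)
    {A B : Matrix n n ℂ} (hA : A.PosDef) (hB : B.PosDef) {a b : ℝ} (ha : 0 ≤ a) (hb : 0 ≤ b)
    (hab : a + b = 1) {ε : ℝ} (hε : 0 < ε) :
    cfc h (a • A + b • B + ε • 1) ≤ a • cfc h A + b • cfc h B := by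
  let V : Matrix (n ⊕ n) n ℂ := fromRows (√a • 1) (√b • 1)
  have compression (X Y : Matrix n n ℂ) : Vᴴ * fromBlocks X 0 0 Y * V = a • X + b • Y := by
    simp [V, Matrix.mul_assoc, fromBlocks_mul_fromRows, fromCols_mul_fromRows, smul_smul,
      conjTranspose_fromRows_eq_fromCols_conjTranspose, Real.mul_self_sqrt, ha, hb]
  have V_isometry : Vᴴ * V = 1 := by
    simpa [← add_smul, hab] using compression 1 1
  simpa only [compression, cfc_fromBlocks_zero hA.isHermitian hB.isHermitian] using
    hh.cfc_compression_add_le V_isometry (posDef_fromBlocks_zero hA hB) hε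

lemma OperatorAntitone.antitoneOn (hh : OperatorAntitone h) : AntitoneOn h (Ioi 0) := by
  intro x hx y _ hxy
  have key := hh.cfc_le_cfc (posDef_algebraMap (n := Fin 1) hx) (algebraMap_mono _ hxy)
  rwa [cfc_algebraMap, cfc_algebraMap, algebraMap_le_algebraMap] at key

lemma OperatorAntitone.map_convexCombination_add_le (hh : OperatorAntitone h) {x y : ℝ}
    (hx : 0 < x) (hy : 0 < y) {a b : ℝ} (ha : 0 ≤ a) (hb : 0 ≤ b) (hab : a + b = 1) {ε : ℝ}
    (hε : 0 < ε) : h (a * x + b * y + ε) ≤ a * h x + b * h y := by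
  have key := hh.cfc_convexCombination_add_le (posDef_algebraMap (n := Fin 1) hx)
    (posDef_algebraMap hy) ha hb hab hε
  simpa only [cfc_algebraMap, Algebra.smul_def, mul_one, ← map_mul, ← map_add,
    algebraMap_le_algebraMap] using key

lemma OperatorAntitone.continuousOn (hh : OperatorAntitone h) : ContinuousOn h (Ioi 0) := by
  refine continuousOn_of_antitoneOn_of_approx_midpoint_convex hh.antitoneOn
    fun x hx y hy ε hε ↦ ?_
  convert hh.map_convexCombination_add_le hx hy (a := 2⁻¹) (b := 2⁻¹) (by norm_num) (by norm_num)
    (by norm_num) hε using 2 <;> ring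

lemma tendsto_cfc_add_smul_one {A : Matrix n n ℂ} (hA : A.PosDef) (hh : ContinuousOn h (Ioi 0)) :
    Tendsto (fun ε : ℝ ↦ cfc h (A + ε • 1)) (𝓝[>] 0) (𝓝 (cfc h A)) := by
  have posDef {ε : ℝ} (hε : 0 ≤ ε) : (A + ε • 1).PosDef :=
    hA.add_posSemidef (PosSemidef.one.smul hε)
  have spectra_subset : ⋃ ε ∈ Ici (0 : ℝ), spectrum ℝ (A + ε • 1) ⊆ Ioi 0 :=
    iUnion₂_subset fun ε hε x hx ↦ spectrum_pos_of_posDef (posDef hε) hx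
  have continuousOn : ContinuousOn (fun ε : ℝ ↦ cfc h (A + ε • 1)) (Ici 0) :=
    ContinuousOn.cfc_of_mem_nhdsSet h (isOpen_Ioi.mem_nhdsSet.2 spectra_subset)
      (by fun_prop) (fun ε hε ↦ (posDef hε).isHermitian.isSelfAdjoint) hh
  simpa using (continuousOn 0 self_mem_Ici).tendsto.mono_left
    (nhdsWithin_mono 0 Ioi_subset_Ici_self)

lemma OperatorAntitone.cfc_convexCombination_le (hh : OperatorAntitone h)
    {A B : Matrix n n ℂ} (hA : A.PosDef) (hB : B.PosDef) {a b : ℝ} (ha : 0 < a) (hb : 0 < b)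
    (hab : a + b = 1) : cfc h (a • A + b • B) ≤ a • cfc h A + b • cfc h B :=
  le_of_tendsto (tendsto_cfc_add_smul_one ((hA.smul ha).add (hB.smul hb)) hh.continuousOn)
    (eventually_mem_nhdsWithin.mono fun _ hε ↦
      hh.cfc_convexCombination_add_le hA hB ha.le hb.le hab hε)

lemma OperatorAntitone.operatorMidpointConvex (hh : OperatorAntitone h) :
    OperatorMidpointConvex h := fun _ _ _ hA hB ↦
  hh.cfc_convexCombination_le hA hB (by norm_num) (by norm_num) (by norm_num)

lemma OperatorMidpointConvex.cfc_add_le (hh : OperatorMidpointConvex h) {n : ℕ}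
    {A D : Matrix (Fin n) (Fin n) ℂ} (hA : A.PosDef) (hD : D.PosSemidef) (k : ℕ) :
    cfc h (A + D) ≤
      (1 - (2⁻¹ : ℝ) ^ k) • cfc h A + (2⁻¹ : ℝ) ^ k • cfc h (A + (2 : ℝ) ^ k • D) := by
  induction k with
  | zero => simp
  | succ k ih =>
    have midpoint : warith 2⁻¹ A (A + (2 : ℝ) ^ (k + 1) • D) = A + (2 : ℝ) ^ k • D := by
      unfold warith
      module
    have convex : cfc h (A + (2 : ℝ) ^ k • D) ≤
        warith 2⁻¹ (cfc h A) (cfc h (A + (2 : ℝ) ^ (k + 1) • D)) :=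
      midpoint ▸ hh n A _ hA (hA.add_posSemidef (hD.smul (by positivity)))
    calc cfc h (A + D)
        ≤ (1 - (2⁻¹ : ℝ) ^ k) • cfc h A + (2⁻¹ : ℝ) ^ k • cfc h (A + (2 : ℝ) ^ k • D) := ih
      _ ≤ (1 - (2⁻¹ : ℝ) ^ k) • cfc h A +
          (2⁻¹ : ℝ) ^ k • warith 2⁻¹ (cfc h A) (cfc h (A + (2 : ℝ) ^ (k + 1) • D)) := by gcongr
      _ = (1 - (2⁻¹ : ℝ) ^ (k + 1)) • cfc h A +
          (2⁻¹ : ℝ) ^ (k + 1) • cfc h (A + (2 : ℝ) ^ (k + 1) • D) := by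
        unfold warith
        module

lemma exists_cfc_le_algebraMap_of_antitoneOn (anti : AntitoneOn h (Ioi 0)) {A : Matrix n n ℂ}
    (hA : A.PosDef) : ∃ c : ℝ, ∀ B, A ≤ B → cfc h B ≤ algebraMap ℝ _ c := by
  cases subsingleton_or_nontrivial (Matrix n n ℂ) with
  | inl _ => exact ⟨0, fun _ _ ↦ (Subsingleton.elim _ _).le⟩
  | inr _ =>
    obtain ⟨r, hr, hrA⟩ := (CFC.exists_pos_algebraMap_le_iff hA.isHermitian.isSelfAdjoint).2
      fun _ ↦ spectrum_pos_of_posDef hA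
    refine ⟨h r, fun B hAB ↦ ?_⟩
    have hB : IsSelfAdjoint B := (posDef_of_posDef_of_le hA hAB).isHermitian
    have le_spectrum := (algebraMap_le_iff_le_spectrum hB).1 (hrA.trans hAB)
    exact cfc_le_algebraMap h _ B
      (fun x hx ↦ anti hr (hr.trans_le (le_spectrum x hx)) (le_spectrum x hx))
      (continuousOn_real_spectrum B h) hB

lemma OperatorMidpointConvex.operatorAntitone (hh : OperatorMidpointConvex h)
    (anti : AntitoneOn h (Ioi 0)) : OperatorAntitone h := by
  intro n A B hA _ hAB
  obtain ⟨c, hc⟩ := exists_cfc_le_algebraMap_of_antitoneOn anti hA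
  have bound (k : ℕ) : cfc h B ≤
      (1 - (2⁻¹ : ℝ) ^ k) • cfc h A + (2⁻¹ : ℝ) ^ k • algebraMap ℝ _ c := by
    have le_shift : A ≤ A + (2 : ℝ) ^ k • (B - A) :=
      le_add_of_nonneg_right (PosSemidef.smul hAB (by positivity)).nonneg
    calc cfc h B = cfc h (A + (B - A)) := by rw [add_sub_cancel]
      _ ≤ _ := hh.cfc_add_le hA hAB k
      _ ≤ _ := by gcongr; exact hc _ le_shift
  have pow_tendsto : Tendsto (fun k : ℕ ↦ (2⁻¹ : ℝ) ^ k) atTop (𝓝 0) :=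
    tendsto_pow_atTop_nhds_zero_of_lt_one (by norm_num) (by norm_num)
  have bound_tendsto := ((pow_tendsto.const_sub 1).smul_const (cfc h A)).add
    (pow_tendsto.smul_const (algebraMap ℝ (Matrix (Fin n) (Fin n) ℂ) c))
  rw [sub_zero, one_smul, zero_smul, add_zero] at bound_tendsto
  exact ge_of_tendsto' bound_tendsto bound

theorem operatorAntitone_iff_antitoneOn_and_operatorMidpointConvex :
    OperatorAntitone h ↔ AntitoneOn h (Ioi 0) ∧ OperatorMidpointConvex h :=
  ⟨fun hh ↦ ⟨hh.antitoneOn, hh.operatorMidpointConvex⟩, fun hh ↦ hh.2.operatorAntitone hh.1⟩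

end OperatorAntitone

/-- The conjugate of `f` by inversion, which exchanges arithmetic and harmonic means. The convention
`0⁻¹ = 0` makes conjugation an involution on all of `ℝ → ℝ`. -/
noncomputable def invConj (f : ℝ → ℝ) : ℝ → ℝ := fun x ↦ (f x⁻¹)⁻¹

section InvConj

open scoped MatrixOrder Matrix.Norms.L2Operator
open Set

variable {n : Type*} [Fintype n] [DecidableEq n] {f : ℝ → ℝ}

lemma invConj_invConj (f : ℝ → ℝ) : invConj (invConj f) = f := by
  funext x
  simp only [invConj, inv_inv]

lemma invConj_pos (hf : ∀ x, 0 < x → 0 < f x) (x : ℝ) (hx : 0 < x) : 0 < invConj f x :=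
  inv_pos.2 (hf _ (inv_pos.2 hx))

lemma antitoneOn_invConj (hf : ∀ x, 0 < x → 0 < f x)
    (anti : AntitoneOn f (Ioi 0)) : AntitoneOn (invConj f) (Ioi 0) := fun _ hx _ hy hxy ↦
  inv_anti₀ (hf _ (inv_pos.2 hx))
    (anti (mem_Ioi.2 (inv_pos.2 hy)) (mem_Ioi.2 (inv_pos.2 hx)) (inv_anti₀ hx hxy))

lemma antitoneOn_invConj_iff (hf : ∀ x, 0 < x → 0 < f x) :
    AntitoneOn (invConj f) (Ioi 0) ↔ AntitoneOn f (Ioi 0) :=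
  ⟨fun anti ↦ invConj_invConj f ▸ antitoneOn_invConj (invConj_pos hf) anti, antitoneOn_invConj hf⟩

lemma inv_le_inv_of_posDef_of_le {A B : Matrix n n ℂ} (hA : A.PosDef) (hAB : A ≤ B) :
    B⁻¹ ≤ A⁻¹ := by
  simpa only [nonsing_inv_eq_ringInverse] using
    CStarAlgebra.ringInverse_le_ringInverse hAB (isStrictlyPositive_iff_posDef.2 hA)

lemma inv_le_iff_inv_le_of_posDef {A B : Matrix n n ℂ} (hA : A.PosDef) (hB : B.PosDef) :
    A⁻¹ ≤ B ↔ B⁻¹ ≤ A where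
  mp hAB := inv_inv_of_posDef hA ▸ inv_le_inv_of_posDef_of_le hA.inv hAB
  mpr hBA := inv_inv_of_posDef hB ▸ inv_le_inv_of_posDef_of_le hB.inv hBA

lemma cfc_invConj {A : Matrix n n ℂ} (hA : A.PosDef) (hf : ∀ x, 0 < x → 0 < f x) :
    cfc (invConj f) A = (cfc f A⁻¹)⁻¹ := by
  rw [← cfc_inv_eq_inv_cfc hA.inv fun x hx ↦ (hf x hx).ne', ← cfc_comp_inv_eq_cfc_inv hA]
  rfl

lemma operatorAntitone_invConj (hf : ∀ x, 0 < x → 0 < f x) (hh : OperatorAntitone f) :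
    OperatorAntitone (invConj f) := by
  intro n A B hA hB hAB
  rw [cfc_invConj hA hf, cfc_invConj hB hf]
  exact inv_le_inv_of_posDef_of_le (posDef_cfc hA.inv hf)
    (hh.cfc_le_cfc hB.inv (inv_le_inv_of_posDef_of_le hA hAB))

lemma operatorAntitone_invConj_iff (hf : ∀ x, 0 < x → 0 < f x) :
    OperatorAntitone (invConj f) ↔ OperatorAntitone f :=
  ⟨fun hh ↦ invConj_invConj f ▸ operatorAntitone_invConj (invConj_pos hf) hh,
    operatorAntitone_invConj hf⟩

lemma posDef_warith {n : ℕ} {t : ℝ} (ht₀ : 0 < t) (ht₁ : t < 1) {A B : Matrix (Fin n) (Fin n) ℂ}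
    (hA : A.PosDef) (hB : B.PosDef) : (warith t A B).PosDef :=
  (hA.smul (sub_pos.2 ht₁)).add (hB.smul ht₀)

lemma wharm_le_cfc_wharm_iff (hf : ∀ x, 0 < x → 0 < f x) {n : ℕ} {t : ℝ} (ht₀ : 0 < t)
    (ht₁ : t < 1) {A B : Matrix (Fin n) (Fin n) ℂ} (hA : A.PosDef) (hB : B.PosDef) :
    wharm t (cfc f A) (cfc f B) ≤ cfc f (wharm t A B) ↔
      cfc (invConj f) (warith t A⁻¹ B⁻¹) ≤
        warith t (cfc (invConj f) A⁻¹) (cfc (invConj f) B⁻¹) := by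
  have hW := posDef_warith ht₀ ht₁ hA.inv hB.inv
  rw [cfc_invConj hW hf, cfc_invConj hA.inv hf, cfc_invConj hB.inv hf, inv_inv_of_posDef hA,
    inv_inv_of_posDef hB]
  exact inv_le_iff_inv_le_of_posDef
    (posDef_warith ht₀ ht₁ (posDef_cfc hA hf).inv (posDef_cfc hB hf).inv) (posDef_cfc hW.inv hf)

lemma operatorMidpointConvex_invConj_iff (hf : ∀ x, 0 < x → 0 < f x) :
    OperatorMidpointConvex (invConj f) ↔
      ∀ (n : ℕ) (A B : Matrix (Fin n) (Fin n) ℂ), A.PosDef → B.PosDef →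
        MLE (wharm 2⁻¹ (cfc f A) (cfc f B)) (cfc f (wharm 2⁻¹ A B)) := by
  have transfer {n : ℕ} {A B : Matrix (Fin n) (Fin n) ℂ} (hA : A.PosDef) (hB : B.PosDef) :=
    wharm_le_cfc_wharm_iff hf (by norm_num) (by norm_num : (2⁻¹ : ℝ) < 1) hA hB
  refine ⟨fun convex n A B hA hB ↦ (transfer hA hB).2 (convex n _ _ hA.inv hB.inv),
    fun harmonic n A B hA hB ↦ ?_⟩
  have key := (transfer hA.inv hB.inv).1 (harmonic n _ _ hA.inv hB.inv)
  rwa [inv_inv_of_posDef hA, inv_inv_of_posDef hB] at key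

end InvConj

theorem stmt_11_general (f : ℝ → ℝ) (hf : ∀ x ∈ Set.Ioi (0 : ℝ), f x ∈ Set.Ioi (0 : ℝ)) :
    OperatorAntitone f ↔
      (AntitoneOn f (Set.Ioi 0) ∧
        ∀ (n : ℕ) (A B : Matrix (Fin n) (Fin n) ℂ), A.PosDef → B.PosDef →
          MLE (wharm 2⁻¹ (cfc f A) (cfc f B)) (cfc f (wharm 2⁻¹ A B))) := by
  rw [← operatorAntitone_invConj_iff hf, ← antitoneOn_invConj_iff hf,
    ← operatorMidpointConvex_invConj_iff hf]
  exact operatorAntitone_iff_antitoneOn_and_operatorMidpointConvex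

theorem stmt_11 (f : ℝ → ℝ) (hf : ContinuousOn f (Set.Ioi 0))
    (hf' : ∀ x ∈ Set.Ioi (0:ℝ), f x ∈ Set.Ioi (0:ℝ)) :
    OperatorAntitone f ↔
      (AntitoneOn f (Set.Ioi 0) ∧
        ∀ (n : ℕ) (A B : Matrix (Fin n) (Fin n) ℂ), A.PosDef → B.PosDef →
          MLE (wharm 2⁻¹ (cfc f A) (cfc f B)) (cfc f (wharm 2⁻¹ A B))) :=
  stmt_11_general f hf'
end

section
/- For every n ∈ ℕ, all n×n positive definite complex matrices A, B, C, and all α, t ∈ [0,1], one has A #_α (B !_t C) ≤ (A #_α B) !_t (A #_α C) in the Loewner order. -/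
open Matrix
open scoped ComplexOrder

/-!
Powers `x ↦ x ^ α` with `α ∈ [0, 1]` are operator concave and commute with inversion, while
inversion is order reversing. Applying concavity to `x⁻¹` and `y⁻¹` and then inverting gives
`(x !_t y) ^ α ≤ x ^ α !_t y ^ α`. Congruence by an invertible element commutes with `!_t`, so
taking `x = a^{-1/2} b a^{-1/2}`, `y = a^{-1/2} c a^{-1/2}` and conjugating by `a^{1/2}` turns this
into the inequality for `#_α`. Nothing here is special to matrices: the argument runs in any unital
C⋆-algebra.
-/

section Means

open scoped Ring

/-- The `t`-weighted harmonic mean `a !_t b` of two invertible elements of a real algebra.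
`Ring.inverse` sends non-units to `0`, so the value is meaningful only when `a`, `b` and
`(1 - t) • a⁻¹ + t • b⁻¹` are units. -/
noncomputable def harmonicMean {R : Type*} [Ring R] [Module ℝ R] (t : ℝ) (a b : R) : R :=
  ((1 - t) • a⁻¹ʳ + t • b⁻¹ʳ)⁻¹ʳ

theorem harmonicMean_mul_mul {R : Type*} [Ring R] [Algebra ℝ R] {u v : R} (hu : IsUnit u)
    (hv : IsUnit v) (t : ℝ) (x y : R) :
    harmonicMean t (u * x * v) (u * y * v) = u * harmonicMean t x y * v := by
  have inverse_congr (z : R) : (u * z * v)⁻¹ʳ = v⁻¹ʳ * z⁻¹ʳ * u⁻¹ʳ := by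
    rw [Ring.inverse_mul (.inr hv), Ring.inverse_mul (.inl hu), mul_assoc]
  have weighted_sum_congr : (1 - t) • (u * x * v)⁻¹ʳ + t • (u * y * v)⁻¹ʳ =
      v⁻¹ʳ * ((1 - t) • x⁻¹ʳ + t • y⁻¹ʳ) * u⁻¹ʳ := by
    simp only [inverse_congr, mul_add, add_mul, mul_smul_comm, smul_mul_assoc]
  rw [harmonicMean, weighted_sum_congr, Ring.inverse_mul (.inr hu.ringInverse),
    Ring.inverse_mul (.inl hv.ringInverse), Ring.inverse_inverse hu, Ring.inverse_inverse hv,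
    ← mul_assoc, harmonicMean]

section FunctionalCalculus

variable {R : Type*} [PartialOrder R] [Ring R] [StarRing R] [TopologicalSpace R]
  [StarOrderedRing R] [Algebra ℝ R] [ContinuousFunctionalCalculus ℝ R IsSelfAdjoint]
  [NonnegSpectrumClass ℝ R]

/-- The `α`-weighted geometric mean `a #_α b` of two strictly positive elements. The powers are
those of the continuous functional calculus, whose value is junk at elements that are not
nonnegative. -/
noncomputable def geometricMean (α : ℝ) (a b : R) : R :=
  a ^ (1 / 2 : ℝ) * (a ^ (-(1 / 2) : ℝ) * b * a ^ (-(1 / 2) : ℝ)) ^ α * a ^ (1 / 2 : ℝ)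

theorem ringInverse_rpow [IsSemitopologicalRing R] [T2Space R] {a : R}
    (ha : IsStrictlyPositive a) (r : ℝ) : a⁻¹ʳ ^ r = (a ^ r)⁻¹ʳ := by
  have hpow : IsUnit (a ^ r) := (ha.rpow a r).isUnit
  obtain ⟨u, rfl⟩ := ha.isUnit
  rw [Ring.inverse_unit, ← CFC.rpow_neg u r ha.nonneg]
  exact hpow.mul_left_cancel
    ((CFC.rpow_mul_rpow_neg r ha).trans (Ring.mul_inverse_cancel _ hpow).symm)

end FunctionalCalculus

section CStarAlgebra

variable {R : Type*} [CStarAlgebra R] [PartialOrder R] [StarOrderedRing R]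

theorem convex_setOf_isStrictlyPositive : Convex ℝ {a : R | IsStrictlyPositive a} := by
  grind [convex_iff_forall_pos]

theorem isStrictlyPositive_weighted_sum {a b : R} (ha : IsStrictlyPositive a)
    (hb : IsStrictlyPositive b) {t : ℝ} (ht : t ∈ Set.Icc (0 : ℝ) 1) :
    IsStrictlyPositive ((1 - t) • a + t • b) :=
  convex_setOf_isStrictlyPositive ha hb (sub_nonneg.2 ht.2) ht.1 (sub_add_cancel 1 t)

theorem isStrictlyPositive_harmonicMean {a b : R} (ha : IsStrictlyPositive a)
    (hb : IsStrictlyPositive b) {t : ℝ} (ht : t ∈ Set.Icc (0 : ℝ) 1) :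
    IsStrictlyPositive (harmonicMean t a b) :=
  (isStrictlyPositive_weighted_sum ha.ringInverse hb.ringInverse ht).ringInverse

theorem harmonicMean_rpow_le {a b : R} (ha : IsStrictlyPositive a) (hb : IsStrictlyPositive b)
    {α t : ℝ} (hα : α ∈ Set.Icc (0 : ℝ) 1) (ht : t ∈ Set.Icc (0 : ℝ) 1) :
    harmonicMean t a b ^ α ≤ harmonicMean t (a ^ α) (b ^ α) := by
  have concavity : (1 - t) • a⁻¹ʳ ^ α + t • b⁻¹ʳ ^ α ≤ ((1 - t) • a⁻¹ʳ + t • b⁻¹ʳ) ^ α :=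
    (CFC.concaveOn_rpow hα).2 ha.ringInverse.nonneg hb.ringInverse.nonneg
      (sub_nonneg.2 ht.2) ht.1 (sub_add_cancel 1 t)
  have lhs_pos : IsStrictlyPositive ((1 - t) • a⁻¹ʳ ^ α + t • b⁻¹ʳ ^ α) :=
    isStrictlyPositive_weighted_sum (ha.ringInverse.rpow _ α) (hb.ringInverse.rpow _ α) ht
  calc harmonicMean t a b ^ α
      = (((1 - t) • a⁻¹ʳ + t • b⁻¹ʳ) ^ α)⁻¹ʳ :=
        ringInverse_rpow (isStrictlyPositive_weighted_sum ha.ringInverse hb.ringInverse ht) α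
    _ ≤ ((1 - t) • a⁻¹ʳ ^ α + t • b⁻¹ʳ ^ α)⁻¹ʳ :=
        CStarAlgebra.ringInverse_le_ringInverse concavity lhs_pos
    _ = harmonicMean t (a ^ α) (b ^ α) := by
        rw [ringInverse_rpow ha, ringInverse_rpow hb, harmonicMean]

theorem stmt_15_general {a b c : R} (ha : IsStrictlyPositive a) (hb : IsStrictlyPositive b)
    (hc : IsStrictlyPositive c) {α t : ℝ} (hα : α ∈ Set.Icc (0 : ℝ) 1)
    (ht : t ∈ Set.Icc (0 : ℝ) 1) :
    geometricMean α a (harmonicMean t b c) ≤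
      harmonicMean t (geometricMean α a b) (geometricMean α a c) := by
  have hsqrt : IsStrictlyPositive (a ^ (1 / 2 : ℝ)) := ha.rpow _ _
  have hinvSqrt : IsStrictlyPositive (a ^ (-(1 / 2) : ℝ)) := ha.rpow _ _
  simp only [geometricMean]
  rw [harmonicMean_mul_mul hsqrt.isUnit hsqrt.isUnit,
    ← harmonicMean_mul_mul hinvSqrt.isUnit hinvSqrt.isUnit]
  refine IsSelfAdjoint.conjugate_le_conjugate (harmonicMean_rpow_le ?_ ?_ hα ht)
    hsqrt.isSelfAdjoint
  · exact hb.conjugate_of_isUnit_of_isSelfAdjoint _ _ hinvSqrt.isUnit hinvSqrt.isSelfAdjoint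
  · exact hc.conjugate_of_isUnit_of_isSelfAdjoint _ _ hinvSqrt.isUnit hinvSqrt.isSelfAdjoint

end CStarAlgebra

end Means

open scoped MatrixOrder Matrix.Norms.L2Operator

section Matrices

variable {n : ℕ} {A B : Matrix (Fin n) (Fin n) ℂ}

theorem mle_iff_le : MLE A B ↔ A ≤ B := Matrix.le_iff.symm

theorem wharm_eq_harmonicMean (t : ℝ) (A B : Matrix (Fin n) (Fin n) ℂ) :
    wharm t A B = harmonicMean t A B := by
  simp only [wharm, harmonicMean, Matrix.nonsing_inv_eq_ringInverse]

theorem mpow_eq_rpow (hA : A.PosSemidef) (r : ℝ) : mpow A r = A ^ r :=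
  (CFC.rpow_eq_cfc_real hA.nonneg).symm

theorem wgeom_eq_geometricMean (hA : A.PosSemidef) (hB : B.PosSemidef) (α : ℝ) :
    wgeom α A B = geometricMean α A B := by
  have hconj : (A ^ (-(1 / 2) : ℝ) * B * A ^ (-(1 / 2) : ℝ)).PosSemidef :=
    (CFC.rpow_nonneg.isSelfAdjoint.conjugate_nonneg hB.nonneg).posSemidef
  rw [wgeom, mpow_eq_rpow hA, mpow_eq_rpow hA, mpow_eq_rpow hconj, geometricMean]

end Matrices

theorem stmt_15 (n : ℕ) (A B C : Matrix (Fin n) (Fin n) ℂ)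
    (hA : A.PosDef) (hB : B.PosDef) (hC : C.PosDef)
    (α : ℝ) (hα : α ∈ Set.Icc (0:ℝ) 1) (t : ℝ) (ht : t ∈ Set.Icc (0:ℝ) 1) :
    MLE (wgeom α A (wharm t B C)) (wharm t (wgeom α A B) (wgeom α A C)) := by
  have hBC := isStrictlyPositive_harmonicMean hB.isStrictlyPositive hC.isStrictlyPositive ht
  rw [mle_iff_le, wharm_eq_harmonicMean, wharm_eq_harmonicMean,
    wgeom_eq_geometricMean hA.posSemidef hBC.posDef.posSemidef,
    wgeom_eq_geometricMean hA.posSemidef hB.posSemidef,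
    wgeom_eq_geometricMean hA.posSemidef hC.posSemidef]
  exact stmt_15_general hA.isStrictlyPositive hB.isStrictlyPositive hC.isStrictlyPositive hα ht
end

section
/- For every n ∈ ℕ, all n×n positive definite complex matrices A, B, C, every p ∈ [-1,1] with p ≠ 0, and all α, t ∈ [0,1], one has A #_{p,α} (B !_t C) ≤ (A #_{p,α} B) !_t (A #_{p,α} C) in the Loewner order, where the quasi-arithmetic power mean is A #_{p,α} B = A^{1/2} ((1-α)I + α (A^{-1/2} B A^{-1/2})^p)^{1/p} A^{1/2}. -/
open Matrix
open scoped ComplexOrder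

/-- The quasi-arithmetic power mean
`A #_{p,α} B = A^{1/2} ((1-α)I + α (A^{-1/2} B A^{-1/2})^p)^{1/p} A^{1/2}`. -/
noncomputable def qmean {n : ℕ} (p α : ℝ) (A B : Matrix (Fin n) (Fin n) ℂ) :
    Matrix (Fin n) (Fin n) ℂ :=
  mpow A (1/2) *
    mpow ((1 - α) • (1 : Matrix (Fin n) (Fin n) ℂ) +
      α • mpow (mpow A (-(1/2)) * B * mpow A (-(1/2))) p) (1/p) *
    mpow A (1/2)

open Set Filter Topology MeasureTheory
open scoped MatrixOrder

/-!
Write `f_{p,α}(x) = (1 - α + α x ^ p) ^ (1 / p)`, so that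
`A #_{p,α} B = A^{1/2} f_{p,α}(A^{-1/2} B A^{-1/2}) A^{1/2}`. Conjugation by an invertible Hermitian
matrix commutes with `!_t`, so it suffices to prove `f_{p,α}(X !_t Y) ≤ f_{p,α}(X) !_t f_{p,α}(Y)`.
As `f_{p,α}(x⁻¹)⁻¹ = f_{-p,α}(x)` and inversion reverses the order, this is concavity of `f_{-p,α}`
at `X⁻¹` and `Y⁻¹`.

Positive matrix concave functions are stable under parallel sums `(f⁻¹ + g⁻¹)⁻¹`, because
`(P⁻¹ + Q⁻¹)⁻¹` is the minimum over `M` of `M* P M + (1 - M)* Q (1 - M)`. The integral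
representation of `x ^ q` extends this to the geometric means `f ^ (1 - q) g ^ q`. Finally, for
`0 < q ≤ 1`, the function `f_{q,α}` is the limit of the iteration
`φ ↦ (1 - α) φ ^ (1 - q) + α φ ^ (1 - q) x ^ q` started at `φ = 1`, and `f_{-q,α}` is the limit of
the same iteration with the weighted arithmetic mean replaced by the weighted harmonic mean.
-/

lemma concaveOn_of_isLeast {E β ι : Type*} [AddCommMonoid E] [Module ℝ E] [AddCommMonoid β]
    [PartialOrder β] [IsOrderedAddMonoid β] [Module ℝ β] [PosSMulMono ℝ β] {s : Set E}
    {F : ι → E → β} {G : E → β} (hs : Convex ℝ s) (hF : ∀ i, ConcaveOn ℝ s (F i))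
    (hG : ∀ x ∈ s, IsLeast (range (F · x)) (G x)) : ConcaveOn ℝ s G := by
  refine ⟨hs, fun x hx y hy a b ha hb hab => ?_⟩
  obtain ⟨i, hi⟩ := (hG _ (hs hx hy ha hb hab)).1
  calc
    a • G x + b • G y ≤ a • F i x + b • F i y := by
      gcongr
      exacts [(hG x hx).2 (mem_range_self i), (hG y hy).2 (mem_range_self i)]
    _ ≤ F i (a • x + b • y) := (hF i).2 hx hy ha hb hab
    _ = G (a • x + b • y) := hi

section

variable {n 𝕜 : Type*} [RCLike 𝕜]

lemma convex_setOf_posDef : Convex ℝ {X : Matrix n n 𝕜 | X.PosDef} := by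
  refine convex_iff_forall_pos.2 fun X hX Y hY a b ha hb _ => ?_
  exact (hX.smul ha).add (hY.smul hb)

lemma posDef_combo {X Y : Matrix n n 𝕜} {t : ℝ} (ht : t ∈ Icc 0 1) (hX : X.PosDef)
    (hY : Y.PosDef) : ((1 - t) • X + t • Y).PosDef :=
  convex_setOf_posDef hX hY (sub_nonneg.2 ht.2) ht.1 (sub_add_cancel 1 t)

variable [Fintype n]

lemma le_iff_re_dotProduct_mulVec_le {P Q : Matrix n n 𝕜} (hP : P.IsHermitian)
    (hQ : Q.IsHermitian) :
    P ≤ Q ↔ ∀ v : n → 𝕜, RCLike.re (star v ⬝ᵥ (P *ᵥ v)) ≤ RCLike.re (star v ⬝ᵥ (Q *ᵥ v)) := by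
  rw [le_iff, posSemidef_iff_dotProduct_mulVec, and_iff_right (hQ.sub hP)]
  refine forall_congr' fun v => ?_
  rw [RCLike.nonneg_iff, and_iff_left ((hQ.sub hP).im_star_dotProduct_mulVec_self v), sub_mulVec,
    dotProduct_sub, map_sub, sub_nonneg]

variable [DecidableEq n] {X S P Q : Matrix n n 𝕜} {f g : ℝ → ℝ}

lemma nonsing_inv_nonsing_inv_of_posDef (hX : X.PosDef) : X⁻¹⁻¹ = X :=
  nonsing_inv_nonsing_inv X ((isUnit_iff_isUnit_det X).1 hX.isUnit)

lemma posDef_conj (hS : S.IsHermitian) (hSunit : IsUnit S) (hX : X.PosDef) :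
    (S * X * S).PosDef := by
  simpa only [hS.eq] using hX.conjTranspose_mul_mul_same (mulVec_injective_of_isUnit hSunit)

lemma inv_le_inv_of_posDef {X Y : Matrix n n ℂ} (hX : X.PosDef) (h : X ≤ Y) : Y⁻¹ ≤ X⁻¹ := by
  open scoped Matrix.Norms.L2Operator in
  rw [nonsing_inv_eq_ringInverse, nonsing_inv_eq_ringInverse]
  exact CStarAlgebra.ringInverse_le_ringInverse h hX.isStrictlyPositive

lemma inv_add_inv_inv (hP : P.PosDef) (hQ : Q.PosDef) :
    (P⁻¹ + Q⁻¹)⁻¹ = Q - Q * (P + Q)⁻¹ * Q := by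
  have woodbury := add_mul_mul_inv_eq_sub Q⁻¹ 1 P⁻¹ 1 hQ.inv.isUnit hP.inv.isUnit
  simp only [one_mul, mul_one, nonsing_inv_nonsing_inv_of_posDef hP,
    nonsing_inv_nonsing_inv_of_posDef hQ, add_comm Q⁻¹] at woodbury
  exact woodbury (hP.add hQ).isUnit

lemma conj_add_conj_one_sub_eq (hP : P.PosDef) (hQ : Q.PosDef) (M : Matrix n n 𝕜) :
    star M * P * M + star (1 - M) * Q * (1 - M) = (P⁻¹ + Q⁻¹)⁻¹ +
      star (M - (P + Q)⁻¹ * Q) * (P + Q) * (M - (P + Q)⁻¹ * Q) := by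
  have hPQ : (P + Q).PosDef := hP.add hQ
  have hdet : IsUnit (P + Q).det := (isUnit_iff_isUnit_det _).1 hPQ.isUnit
  have hstar : star ((P + Q)⁻¹ * Q) = Q * (P + Q)⁻¹ := by
    rw [star_mul, star_eq_conjTranspose, star_eq_conjTranspose, hQ.isHermitian,
      hPQ.inv.isHermitian]
  have hright : (P + Q) * ((P + Q)⁻¹ * Q) = Q := mul_nonsing_inv_cancel_left _ _ hdet
  have hleft : Q * (P + Q)⁻¹ * (P + Q) = Q := nonsing_inv_mul_cancel_right _ _ hdet
  rw [inv_add_inv_inv hP hQ, star_sub, star_sub, star_one, hstar, sub_mul (star M), hleft,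
    mul_sub _ M, sub_mul _ _ ((P + Q)⁻¹ * Q), mul_assoc (star M) (P + Q) ((P + Q)⁻¹ * Q), hright]
  noncomm_ring

lemma isLeast_inv_add_inv_inv (hP : P.PosDef) (hQ : Q.PosDef) :
    IsLeast (range fun M : Matrix n n 𝕜 => star M * P * M + star (1 - M) * Q * (1 - M))
      (P⁻¹ + Q⁻¹)⁻¹ := by
  simp only [conj_add_conj_one_sub_eq hP hQ]
  constructor
  · exact ⟨(P + Q)⁻¹ * Q, by simp only [sub_self, mul_zero, add_zero]⟩
  · rintro _ ⟨M, rfl⟩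
    exact le_add_of_nonneg_right (star_left_conjugate_nonneg (hP.add hQ).posSemidef.nonneg _)

lemma continuousOn_spectrum_real (X : Matrix n n 𝕜) (f : ℝ → ℝ) :
    ContinuousOn f (spectrum ℝ X) :=
  finite_real_spectrum.continuousOn f

lemma spectrum_real_subset_Ioi_of_posDef (hX : X.PosDef) : spectrum ℝ X ⊆ Ioi 0 := by
  rw [hX.isHermitian.spectrum_real_eq_range_eigenvalues]
  exact range_subset_iff.2 hX.eigenvalues_pos

lemma posDef_cfc_s17 (hX : X.PosDef) (hf : MapsTo f (Ioi 0) (Ioi 0)) : (cfc f X).PosDef := by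
  have hfX : (cfc f X).IsHermitian := cfc_predicate f X
  refine hfX.posDef_iff_eigenvalues_pos.2 fun i => ?_
  have hi := hfX.eigenvalues_mem_spectrum_real i
  rw [cfc_map_spectrum f X hX.isHermitian.isSelfAdjoint (continuousOn_spectrum_real X f)] at hi
  obtain ⟨x, hx, hxi⟩ := hi
  exact hxi ▸ hf (spectrum_real_subset_Ioi_of_posDef hX hx)

lemma inv_cfc_of_posDef (hX : X.PosDef) (hf : MapsTo f (Ioi 0) (Ioi 0)) :
    (cfc f X)⁻¹ = cfc (fun x => (f x)⁻¹) X := by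
  rw [nonsing_inv_eq_ringInverse, ← cfc_inv f X
    (fun x hx => (hf (spectrum_real_subset_Ioi_of_posDef hX hx)).ne')
    (continuousOn_spectrum_real X f) hX.isHermitian.isSelfAdjoint]

lemma cfc_nonsing_inv_of_posDef (hX : X.PosDef) (f : ℝ → ℝ) :
    cfc f X⁻¹ = cfc (fun x => f x⁻¹) X := by
  have hXinv : X⁻¹ = cfc (·⁻¹ : ℝ → ℝ) X := by
    rw [← inv_cfc_of_posDef (f := fun x => x) hX (mapsTo_id _),
      cfc_id' ℝ X hX.isHermitian.isSelfAdjoint]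
  rw [hXinv, ← cfc_comp' f (·⁻¹) X ((finite_real_spectrum.image _).continuousOn _)
    (continuousOn_spectrum_real X _) hX.isHermitian.isSelfAdjoint]

lemma re_dotProduct_cfc_mulVec (hX : X.IsHermitian) (f : ℝ → ℝ) (v : n → 𝕜) :
    RCLike.re (star v ⬝ᵥ (cfc f X *ᵥ v)) =
      ∑ i, ‖(star (hX.eigenvectorUnitary : Matrix n n 𝕜) *ᵥ v) i‖ ^ 2 * f (hX.eigenvalues i) := by
  generalize hU_def : (hX.eigenvectorUnitary : Matrix n n 𝕜) = U
  have hU : star v ᵥ* U = star (star U *ᵥ v) := by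
    rw [star_mulVec, star_eq_conjTranspose, conjTranspose_conjTranspose]
  rw [hX.cfc_eq, IsHermitian.cfc, Unitary.conjStarAlgAut_apply, ← mulVec_mulVec, ← mulVec_mulVec,
    dotProduct_mulVec, hU_def, hU]
  simp only [dotProduct, mulVec_diagonal, map_sum]
  refine Finset.sum_congr rfl fun i _ => ?_
  simp only [Pi.star_apply, Function.comp_apply, RCLike.star_def, mul_left_comm (starRingEnd 𝕜 _),
    RCLike.conj_mul]
  rw [← RCLike.ofReal_pow, ← RCLike.ofReal_mul, RCLike.ofReal_re, mul_comm]

variable (n 𝕜) in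
/-- Matrix concavity of `f` on `(0, ∞)`: concavity, for the Loewner order, of `X ↦ f(X)` on the
positive definite `n × n` matrices over `𝕜`. The size is fixed, so `f` is operator concave when this
holds for all `n`. Values of `f` outside `(0, ∞)` are irrelevant. -/
def MatrixConcave (f : ℝ → ℝ) : Prop :=
  ConcaveOn ℝ {X : Matrix n n 𝕜 | X.PosDef} (cfc f)

namespace MatrixConcave

lemma iff_concaveOn_re_dotProduct : MatrixConcave n 𝕜 f ↔ ∀ v : n → 𝕜,
    ConcaveOn ℝ {X : Matrix n n 𝕜 | X.PosDef} fun X => RCLike.re (star v ⬝ᵥ (cfc f X *ᵥ v)) := by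
  have hcfc (a : ℝ) (X : Matrix n n 𝕜) : (a • cfc f X).IsHermitian :=
    IsSelfAdjoint.smul (.all a) (cfc_predicate f X)
  have quad_combo (X Y : Matrix n n 𝕜) (a b : ℝ) (v : n → 𝕜) :
      RCLike.re (star v ⬝ᵥ ((a • X + b • Y) *ᵥ v)) =
        a • RCLike.re (star v ⬝ᵥ (X *ᵥ v)) + b • RCLike.re (star v ⬝ᵥ (Y *ᵥ v)) := by
    simp only [add_mulVec, smul_mulVec, dotProduct_add, dotProduct_smul, map_add, RCLike.smul_re,
      smul_eq_mul]
  constructor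
  · intro hf v
    refine ⟨convex_setOf_posDef, fun X hX Y hY a b ha hb hab => ?_⟩
    rw [← quad_combo]
    exact (le_iff_re_dotProduct_mulVec_le ((hcfc a X).add (hcfc b Y)) (cfc_predicate f _)).1
      (hf.2 hX hY ha hb hab) v
  · intro hf
    refine ⟨convex_setOf_posDef, fun X hX Y hY a b ha hb hab => ?_⟩
    refine (le_iff_re_dotProduct_mulVec_le ((hcfc a X).add (hcfc b Y)) (cfc_predicate f _)).2
      fun v => ?_
    rw [quad_combo]
    exact (hf v).2 hX hY ha hb hab

protected lemma congr (hf : MatrixConcave n 𝕜 f) (hfg : EqOn f g (Ioi 0)) : MatrixConcave n 𝕜 g :=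
  ConcaveOn.congr hf fun _ hX => cfc_congr (hfg.mono (spectrum_real_subset_Ioi_of_posDef hX))

protected lemma add (hf : MatrixConcave n 𝕜 f) (hg : MatrixConcave n 𝕜 g) :
    MatrixConcave n 𝕜 fun x => f x + g x :=
  (ConcaveOn.add hf hg).congr fun X _ =>
    (cfc_add X f g (continuousOn_spectrum_real X f) (continuousOn_spectrum_real X g)).symm

protected lemma const_mul {a : ℝ} (ha : 0 ≤ a) (hf : MatrixConcave n 𝕜 f) :
    MatrixConcave n 𝕜 fun x => a * f x :=
  (ConcaveOn.smul ha hf).congr fun X _ =>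
    (cfc_const_mul a f X (continuousOn_spectrum_real X f)).symm

protected lemma const (a : ℝ) : MatrixConcave n 𝕜 fun _ => a :=
  (concaveOn_const (algebraMap ℝ _ a) convex_setOf_posDef).congr fun X hX =>
    (cfc_const a X hX.isHermitian.isSelfAdjoint).symm

protected lemma id : MatrixConcave n 𝕜 fun x => x :=
  (concaveOn_id convex_setOf_posDef).congr fun X hX =>
    (cfc_id' ℝ X hX.isHermitian.isSelfAdjoint).symm

lemma of_tendsto {ι : Type*} {l : Filter ι} [l.NeBot] {F : ι → ℝ → ℝ}
    (hF : ∀ i, MatrixConcave n 𝕜 (F i)) (h : ∀ x ∈ Ioi 0, Tendsto (F · x) l (𝓝 (f x))) :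
    MatrixConcave n 𝕜 f := by
  refine iff_concaveOn_re_dotProduct.2 fun v =>
    ⟨convex_setOf_posDef, fun X hX Y hY a b ha hb hab => ?_⟩
  have tendsto_quad (Z : Matrix n n 𝕜) (hZ : Z.PosDef) :
      Tendsto (fun i => RCLike.re (star v ⬝ᵥ (cfc (F i) Z *ᵥ v))) l
        (𝓝 (RCLike.re (star v ⬝ᵥ (cfc f Z *ᵥ v)))) := by
    simp only [re_dotProduct_cfc_mulVec hZ.isHermitian]
    exact tendsto_finsetSum _ fun i _ => (h _ (hZ.eigenvalues_pos i)).const_mul _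
  exact le_of_tendsto_of_tendsto'
    (((tendsto_quad X hX).const_smul a).add ((tendsto_quad Y hY).const_smul b))
    (tendsto_quad _ (convex_setOf_posDef hX hY ha hb hab))
    fun i => (iff_concaveOn_re_dotProduct.1 (hF i) v).2 hX hY ha hb hab

protected lemma integral {ι : Type*} [MeasurableSpace ι] {μ : Measure ι} {F : ι → ℝ → ℝ}
    (hF : ∀ᵐ s ∂μ, MatrixConcave n 𝕜 (F s)) (hint : ∀ x ∈ Ioi 0, Integrable (F · x) μ) :
    MatrixConcave n 𝕜 fun x => ∫ s, F s x ∂μ := by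
  refine iff_concaveOn_re_dotProduct.2 fun v => ?_
  have hint' (i : n) {Z : Matrix n n 𝕜} (hZ : Z.PosDef) :=
    (hint _ (hZ.eigenvalues_pos i)).const_mul
      (‖(star (hZ.isHermitian.eigenvectorUnitary : Matrix n n 𝕜) *ᵥ v) i‖ ^ 2)
  have concave_integral : ConcaveOn ℝ {Z : Matrix n n 𝕜 | Z.PosDef} fun Z =>
      ∫ s, RCLike.re (star v ⬝ᵥ (cfc (F s) Z *ᵥ v)) ∂μ := by
    refine integral_concaveOn_of_integrand_ae convex_setOf_posDef
      (hF.mono fun s hs => iff_concaveOn_re_dotProduct.1 hs v) fun Z hZ => ?_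
    simp only [re_dotProduct_cfc_mulVec hZ.isHermitian]
    exact integrable_finsetSum _ fun i _ => hint' i hZ
  refine concave_integral.congr fun Z hZ => ?_
  simp only [re_dotProduct_cfc_mulVec hZ.isHermitian]
  rw [integral_finsetSum _ fun i _ => hint' i hZ]
  simp only [integral_const_mul]

lemma parallelSum (hf : MatrixConcave n 𝕜 f) (hg : MatrixConcave n 𝕜 g)
    (hfpos : MapsTo f (Ioi 0) (Ioi 0)) (hgpos : MapsTo g (Ioi 0) (Ioi 0)) :
    MatrixConcave n 𝕜 fun x => ((f x)⁻¹ + (g x)⁻¹)⁻¹ := by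
  have conjugate_concave (M : Matrix n n 𝕜) {h : ℝ → ℝ} (hh : MatrixConcave n 𝕜 h) :
      ConcaveOn ℝ {X : Matrix n n 𝕜 | X.PosDef} fun X => star M * cfc h X * M := by
    refine ⟨convex_setOf_posDef, fun X hX Y hY a b ha hb hab => ?_⟩
    have := star_left_conjugate_le_conjugate (hh.2 hX hY ha hb hab) M
    simpa only [mul_add, add_mul, mul_smul_comm, smul_mul_assoc] using this
  refine concaveOn_of_isLeast convex_setOf_posDef
    (fun M => (conjugate_concave M hf).add (conjugate_concave (1 - M) hg)) fun X hX => ?_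
  have hsum : cfc (fun x => ((f x)⁻¹ + (g x)⁻¹)⁻¹) X = ((cfc f X)⁻¹ + (cfc g X)⁻¹)⁻¹ := by
    rw [inv_cfc_of_posDef hX hfpos, inv_cfc_of_posDef hX hgpos,
      ← cfc_add X _ _ (continuousOn_spectrum_real X _) (continuousOn_spectrum_real X _),
      inv_cfc_of_posDef hX]
    exact fun x hx => mem_Ioi.2 (add_pos (inv_pos.2 (hfpos hx)) (inv_pos.2 (hgpos hx)))
  rw [hsum]
  exact isLeast_inv_add_inv_inv (posDef_cfc_s17 hX hfpos) (posDef_cfc_s17 hX hgpos)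

lemma harmMean {α : ℝ} (hα : α ∈ Icc 0 1) (hf : MatrixConcave n 𝕜 f) (hg : MatrixConcave n 𝕜 g)
    (hfpos : MapsTo f (Ioi 0) (Ioi 0)) (hgpos : MapsTo g (Ioi 0) (Ioi 0)) :
    MatrixConcave n 𝕜 fun x => ((1 - α) * (f x)⁻¹ + α * (g x)⁻¹)⁻¹ := by
  rcases hα.1.eq_or_lt with rfl | hα0
  · simpa using hf
  rcases hα.2.eq_or_lt with rfl | hα1
  · simpa using hg
  have hβ : 0 < (1 - α)⁻¹ := inv_pos.2 (sub_pos.2 hα1)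
  have hα' : 0 < α⁻¹ := inv_pos.2 hα0
  simpa only [mul_inv, inv_inv] using (hf.const_mul hβ.le).parallelSum (hg.const_mul hα'.le)
    (fun x hx => mul_pos hβ (hfpos hx)) fun x hx => mul_pos hα' (hgpos hx)

lemma geomMean {q : ℝ} (hq : q ∈ Icc 0 1) (hf : MatrixConcave n 𝕜 f) (hg : MatrixConcave n 𝕜 g)
    (hfpos : MapsTo f (Ioi 0) (Ioi 0)) (hgpos : MapsTo g (Ioi 0) (Ioi 0)) :
    MatrixConcave n 𝕜 fun x => f x ^ (1 - q) * g x ^ q := by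
  rcases hq.1.eq_or_lt with rfl | hq0
  · simpa using hf
  rcases hq.2.eq_or_lt with rfl | hq1
  · simpa using hg
  obtain ⟨μ, hμ⟩ := Real.exists_measure_rpow_eq_integral_rpowIntegrand₀₁ ⟨hq0, hq1⟩
  have hgf {x : ℝ} (hx : x ∈ Ioi 0) : g x / f x ∈ Ici 0 :=
    mem_Ici.2 (div_pos (hgpos hx) (hfpos hx)).le
  have integrand_concave : ∀ᵐ s ∂μ.restrict (Ioi 0),
      MatrixConcave n 𝕜 fun x => f x * Real.rpowIntegrand₀₁ q s (g x / f x) := by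
    refine ae_restrict_of_forall_mem measurableSet_Ioi fun s (hs : 0 < s) => ?_
    have hs' := inv_pos.2 hs
    refine ((hf.parallelSum (hg.const_mul hs'.le) hfpos fun x hx =>
      mul_pos hs' (hgpos hx)).const_mul (Real.rpow_nonneg hs.le (q - 1))).congr fun x hx => ?_
    have hfx : 0 < f x := hfpos hx
    have hgx : 0 < g x := hgpos hx
    simp only [Real.rpowIntegrand₀₁_eq_pow_div ⟨hq0, hq1⟩ hs.le (hgf hx)]
    field_simp
    ring
  refine (MatrixConcave.integral integrand_concave fun x hx =>
    (hμ _ (hgf hx)).1.const_mul (f x)).congr fun x hx => ?_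
  have hfx : 0 < f x := hfpos hx
  have hgx : 0 < g x := hgpos hx
  simp only [integral_const_mul, ← (hμ _ (hgf hx)).2]
  rw [Real.div_rpow hgx.le hfx.le, Real.rpow_sub hfx, Real.rpow_one]
  field_simp

-- `c ^ (1 / q)` is the fixed point of `φ ↦ φ ^ (1 - q) * c`; started at `1`, the iterates of this
-- map are the powers of `c` with exponents `(1 - (1 - q) ^ k) / q`.
lemma rpow_one_div_of_step {q : ℝ} (hq : q ∈ Ioc 0 1) {c : ℝ → ℝ} (hc : MapsTo c (Ioi 0) (Ioi 0))
    (hstep : ∀ φ : ℝ → ℝ, MatrixConcave n 𝕜 φ → MapsTo φ (Ioi 0) (Ioi 0) →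
      MatrixConcave n 𝕜 fun x => φ x ^ (1 - q) * c x) :
    MatrixConcave n 𝕜 fun x => c x ^ (1 / q) := by
  have iterate_concave (k : ℕ) : MatrixConcave n 𝕜 fun x => c x ^ ((1 - (1 - q) ^ k) / q) := by
    induction k with
    | zero => simpa using MatrixConcave.const (n := n) (𝕜 := 𝕜) 1
    | succ k ih =>
      refine (hstep _ ih fun x hx => Real.rpow_pos_of_pos (hc hx) _).congr fun x hx => ?_
      have hcx : 0 < c x := hc hx
      have hq0 : q ≠ 0 := hq.1.ne'
      simp only
      rw [← Real.rpow_mul hcx.le, ← Real.rpow_add_one hcx.ne']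
      congr 1
      field_simp
      ring
  refine of_tendsto (l := atTop) iterate_concave fun x hx => ?_
  have exponent_tendsto : Tendsto (fun k : ℕ => (1 - (1 - q) ^ k) / q) atTop (𝓝 (1 / q)) := by
    simpa using ((tendsto_pow_atTop_nhds_zero_of_lt_one (sub_nonneg.2 hq.2)
      (sub_lt_self 1 hq.1)).const_sub 1).div_const q
  exact (Real.continuous_const_rpow (hc hx).ne').continuousAt.tendsto.comp exponent_tendsto

end MatrixConcave

/-- The function `f_{p,α}(x) = (1 - α + α x ^ p) ^ (1 / p)` on `(0, ∞)`, for `p ≠ 0`: the power mean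
of `1` and `x`, which represents the matrix mean via `qmean p α 1 X = f_{p,α}(X)`. -/
noncomputable def powerMean (p α x : ℝ) : ℝ := (1 - α + α * x ^ p) ^ (1 / p)

lemma one_sub_add_mul_pos {α y : ℝ} (hα : α ∈ Icc 0 1) (hy : 0 < y) : 0 < 1 - α + α * y := by
  simpa using convex_Ioi (0 : ℝ) (mem_Ioi.2 one_pos) (mem_Ioi.2 hy) (sub_nonneg.2 hα.2) hα.1
    (sub_add_cancel 1 α)

lemma mapsTo_powerMean (p : ℝ) {α : ℝ} (hα : α ∈ Icc 0 1) :
    MapsTo (powerMean p α) (Ioi 0) (Ioi 0) := fun _ hx =>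
  Real.rpow_pos_of_pos (one_sub_add_mul_pos hα (Real.rpow_pos_of_pos hx p)) _

lemma inv_powerMean_inv (p : ℝ) {α x : ℝ} (hα : α ∈ Icc 0 1) (hx : 0 < x) :
    (powerMean p α x⁻¹)⁻¹ = powerMean (-p) α x := by
  have hbase := one_sub_add_mul_pos hα (Real.rpow_pos_of_pos (inv_pos.2 hx) p)
  rw [powerMean, powerMean, ← Real.rpow_neg hbase.le, Real.inv_rpow hx.le, ← Real.rpow_neg hx.le,
    one_div_neg_eq_neg_one_div]

lemma matrixConcave_powerMean_of_pos {q α : ℝ} (hq : q ∈ Ioc 0 1) (hα : α ∈ Icc 0 1) :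
    MatrixConcave n 𝕜 (powerMean q α) := by
  refine MatrixConcave.rpow_one_div_of_step hq
    (fun x hx => one_sub_add_mul_pos hα (Real.rpow_pos_of_pos hx q)) fun φ hφ hφpos => ?_
  have hq' := Ioc_subset_Icc_self hq
  have hone := hφ.geomMean hq' (.const 1) hφpos fun _ _ => mem_Ioi.2 one_pos
  have hid := hφ.geomMean hq' .id hφpos (mapsTo_id _)
  refine ((hone.const_mul (sub_nonneg.2 hα.2)).add (hid.const_mul hα.1)).congr fun x _ => ?_
  simp only [Real.one_rpow]
  ring

lemma matrixConcave_powerMean_neg {q α : ℝ} (hq : q ∈ Ioc 0 1) (hα : α ∈ Icc 0 1) :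
    MatrixConcave n 𝕜 (powerMean (-q) α) := by
  have hbase {x : ℝ} (hx : 0 < x) : 0 < 1 - α + α * x ^ (-q) :=
    one_sub_add_mul_pos hα (Real.rpow_pos_of_pos hx (-q))
  refine (MatrixConcave.rpow_one_div_of_step (c := fun x => (1 - α + α * x ^ (-q))⁻¹) hq
    (fun x hx => inv_pos.2 (hbase hx)) fun φ hφ hφpos => ?_).congr fun x hx => ?_
  · have hq' := Ioc_subset_Icc_self hq
    have geom_pos {g : ℝ → ℝ} (hg : MapsTo g (Ioi 0) (Ioi 0)) :
        MapsTo (fun x => φ x ^ (1 - q) * g x ^ q) (Ioi 0) (Ioi 0) := fun x hx =>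
      mul_pos (Real.rpow_pos_of_pos (hφpos hx) _) (Real.rpow_pos_of_pos (hg hx) _)
    have mapsTo_one : MapsTo (fun _ : ℝ => (1 : ℝ)) (Ioi 0) (Ioi 0) := fun _ _ => mem_Ioi.2 one_pos
    have hone := hφ.geomMean hq' (.const 1) hφpos mapsTo_one
    have hid := hφ.geomMean hq' .id hφpos (mapsTo_id _)
    refine (hone.harmMean hα hid (geom_pos mapsTo_one) (geom_pos (mapsTo_id _))).congr
      fun x (hx : 0 < x) => ?_
    simp only [Real.one_rpow, Real.rpow_neg hx.le, mul_one, mul_inv]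
    rw [mul_left_comm α, mul_comm (1 - α), ← mul_add, mul_inv, inv_inv]
  · simp only [powerMean, one_div_neg_eq_neg_one_div]
    rw [Real.inv_rpow (hbase hx).le, Real.rpow_neg (hbase hx).le]

lemma matrixConcave_powerMean {p α : ℝ} (hp : p ∈ Icc (-1) 1) (hp0 : p ≠ 0) (hα : α ∈ Icc 0 1) :
    MatrixConcave n 𝕜 (powerMean p α) := by
  rcases hp0.lt_or_gt with hneg | hpos
  · simpa only [neg_neg] using
      matrixConcave_powerMean_neg (q := -p) ⟨neg_pos.2 hneg, neg_le.1 hp.1⟩ hα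
  · exact matrixConcave_powerMean_of_pos ⟨hpos, hp.2⟩ hα

end

section

variable {n : ℕ} {A B S T X Y : Matrix (Fin n) (Fin n) ℂ} {t : ℝ}

lemma posDef_wharm (ht : t ∈ Icc 0 1) (hX : X.PosDef) (hY : Y.PosDef) : (wharm t X Y).PosDef :=
  (posDef_combo ht hX.inv hY.inv).inv

lemma inv_wharm (ht : t ∈ Icc 0 1) (hX : X.PosDef) (hY : Y.PosDef) :
    (wharm t X Y)⁻¹ = (1 - t) • X⁻¹ + t • Y⁻¹ :=
  nonsing_inv_nonsing_inv_of_posDef (posDef_combo ht hX.inv hY.inv)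

lemma wharm_mul_mul (t : ℝ) (hS : IsUnit S) (hT : IsUnit T) (X Y : Matrix (Fin n) (Fin n) ℂ) :
    wharm t (S * X * T) (S * Y * T) = S * wharm t X Y * T := by
  have hsum : (1 - t) • (S * X * T)⁻¹ + t • (S * Y * T)⁻¹ =
      T⁻¹ * ((1 - t) • X⁻¹ + t • Y⁻¹) * S⁻¹ := by
    simp only [Matrix.mul_inv_rev, mul_add, add_mul, mul_smul_comm, smul_mul_assoc, mul_assoc]
  rw [wharm, wharm, hsum, Matrix.mul_inv_rev, Matrix.mul_inv_rev,
    nonsing_inv_nonsing_inv S ((isUnit_iff_isUnit_det S).1 hS),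
    nonsing_inv_nonsing_inv T ((isUnit_iff_isUnit_det T).1 hT), mul_assoc]

lemma cfc_wharm_le (hX : X.PosDef) (hY : Y.PosDef) (ht : t ∈ Icc 0 1) {f : ℝ → ℝ}
    (hf : MapsTo f (Ioi 0) (Ioi 0)) (hconc : MatrixConcave (Fin n) ℂ fun x => (f x⁻¹)⁻¹) :
    cfc f (wharm t X Y) ≤ wharm t (cfc f X) (cfc f Y) := by
  have adjoint_inv {Z : Matrix (Fin n) (Fin n) ℂ} (hZ : Z.PosDef) :
      cfc (fun x => (f x⁻¹)⁻¹) Z⁻¹ = (cfc f Z)⁻¹ := by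
    simp only [cfc_nonsing_inv_of_posDef hZ, inv_inv, inv_cfc_of_posDef hZ hf]
  have hW := posDef_wharm ht hX hY
  have hfW := posDef_wharm ht (posDef_cfc_s17 hX hf) (posDef_cfc_s17 hY hf)
  have inv_le : (wharm t (cfc f X) (cfc f Y))⁻¹ ≤ (cfc f (wharm t X Y))⁻¹ := by
    rw [inv_wharm ht (posDef_cfc_s17 hX hf) (posDef_cfc_s17 hY hf), ← adjoint_inv hX, ← adjoint_inv hY,
      ← adjoint_inv hW, inv_wharm ht hX hY]
    exact hconc.2 hX.inv hY.inv (sub_nonneg.2 ht.2) ht.1 (sub_add_cancel 1 t)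
  simpa only [nonsing_inv_nonsing_inv_of_posDef hfW,
    nonsing_inv_nonsing_inv_of_posDef (posDef_cfc_s17 hW hf)] using inv_le_inv_of_posDef hfW.inv inv_le

lemma posDef_mpow (hA : A.PosDef) (r : ℝ) : (mpow A r).PosDef :=
  posDef_cfc_s17 hA fun _ hx => Real.rpow_pos_of_pos hx r

lemma mpow_one_div_eq_cfc_powerMean (p α : ℝ) (hX : X.IsHermitian) :
    mpow ((1 - α) • 1 + α • mpow X p) (1 / p) = cfc (powerMean p α) X := by
  have hbase : (1 - α) • 1 + α • mpow X p = cfc (fun x : ℝ => 1 - α + α * x ^ p) X := by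
    rw [cfc_const_add _ _ X (continuousOn_spectrum_real X _) hX.isSelfAdjoint,
      cfc_const_mul _ _ X (continuousOn_spectrum_real X _), Algebra.algebraMap_eq_smul_one, mpow]
  rw [hbase, mpow, ← cfc_comp' (· ^ (1 / p)) _ X
    ((finite_real_spectrum.image _).continuousOn _) (continuousOn_spectrum_real X _)
    hX.isSelfAdjoint]
  rfl

lemma qmean_eq_conj_cfc_powerMean (p α : ℝ) (hA : A.PosDef) (hB : B.PosDef) :
    qmean p α A B = mpow A (1 / 2) *
      cfc (powerMean p α) (mpow A (-(1 / 2)) * B * mpow A (-(1 / 2))) * mpow A (1 / 2) := by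
  have hS : (mpow A (-(1 / 2))).PosDef := posDef_mpow hA _
  rw [qmean, mpow_one_div_eq_cfc_powerMean p α
    (posDef_conj hS.isHermitian hS.isUnit hB).isHermitian]

end

theorem stmt_17 (n : ℕ) (A B C : Matrix (Fin n) (Fin n) ℂ)
    (hA : A.PosDef) (hB : B.PosDef) (hC : C.PosDef)
    (p : ℝ) (hp : p ∈ Set.Icc (-1:ℝ) 1) (hp0 : p ≠ 0)
    (α : ℝ) (hα : α ∈ Set.Icc (0:ℝ) 1) (t : ℝ) (ht : t ∈ Set.Icc (0:ℝ) 1) :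
    MLE (qmean p α A (wharm t B C)) (wharm t (qmean p α A B) (qmean p α A C)) := by
  have hR : (mpow A (1 / 2)).PosDef := posDef_mpow hA _
  have hS : (mpow A (-(1 / 2))).PosDef := posDef_mpow hA _
  have hadjoint : MatrixConcave (Fin n) ℂ fun x => (powerMean p α x⁻¹)⁻¹ :=
    (matrixConcave_powerMean (neg_mem_Icc_iff.2 (by simpa using hp)) (neg_ne_zero.2 hp0) hα).congr
      fun x hx => (inv_powerMean_inv p hα hx).symm
  have hpowerMean := cfc_wharm_le (posDef_conj hS.isHermitian hS.isUnit hB)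
    (posDef_conj hS.isHermitian hS.isUnit hC) ht (mapsTo_powerMean p hα) hadjoint
  rw [qmean_eq_conj_cfc_powerMean p α hA (posDef_wharm ht hB hC),
    qmean_eq_conj_cfc_powerMean p α hA hB, qmean_eq_conj_cfc_powerMean p α hA hC,
    wharm_mul_mul t hR.isUnit hR.isUnit, ← wharm_mul_mul t hS.isUnit hS.isUnit]
  exact hR.isHermitian.isSelfAdjoint.conjugate_le_conjugate hpowerMean
end

section
/- For every n ∈ ℕ, all n×n positive definite complex matrices A, B, and every r ∈ [-1,0], one has (A ! B)^r ≥ (A^r + B^r)/2 in the Loewner order. -/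
open Matrix
open scoped ComplexOrder

/-!
Inversion turns the harmonic mean into the arithmetic mean, `(A !_t B)⁻¹ = A⁻¹ ∇_t B⁻¹`, and the
exponent `r ∈ [-1, 0]` into `-r ∈ [0, 1]`. The inequality is therefore the operator concavity of
`x ↦ x ^ (-r)`, applied to `A⁻¹` and `B⁻¹`.
-/

section

open scoped MatrixOrder Matrix.Norms.L2Operator

variable {n : ℕ} {A B : Matrix (Fin n) (Fin n) ℂ}

theorem mpow_inv (hA : A.PosDef) (r : ℝ) : mpow A⁻¹ r = mpow A (-r) := by
  rw [mpow_eq_rpow hA.inv.posSemidef, mpow_eq_rpow hA.posSemidef]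
  obtain ⟨u, rfl⟩ := hA.isUnit
  rw [← Matrix.coe_units_inv, CFC.rpow_neg u r hA.posSemidef.nonneg]

theorem warith_posDef {t : ℝ} (ht : t ∈ Set.Icc 0 1) (hA : A.PosDef) (hB : B.PosDef) :
    (warith t A B).PosDef := by
  have hconvex : Convex ℝ {X : Matrix (Fin n) (Fin n) ℂ | IsStrictlyPositive X} :=
    CStarAlgebra.convexOn_ringInverse.1
  exact (hconvex hA.isStrictlyPositive hB.isStrictlyPositive
    (sub_nonneg.2 ht.2) ht.1 (sub_add_cancel 1 t)).posDef

theorem warith_mpow_le_mpow_warith {t p : ℝ} (ht : t ∈ Set.Icc 0 1) (hp : p ∈ Set.Icc 0 1)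
    (hA : A.PosSemidef) (hB : B.PosSemidef) :
    MLE (warith t (mpow A p) (mpow B p)) (mpow (warith t A B) p) := by
  have hAB : (warith t A B).PosSemidef :=
    (hA.smul (sub_nonneg.2 ht.2)).add (hB.smul ht.1)
  rw [mpow_eq_rpow hA, mpow_eq_rpow hB, mpow_eq_rpow hAB]
  exact Matrix.le_iff.1 <| (CFC.concaveOn_rpow hp).2 hA.nonneg hB.nonneg
    (sub_nonneg.2 ht.2) ht.1 (sub_add_cancel 1 t)

theorem mpow_wharm {t : ℝ} (ht : t ∈ Set.Icc 0 1) (hA : A.PosDef) (hB : B.PosDef) (r : ℝ) :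
    mpow (wharm t A B) r = mpow (warith t A⁻¹ B⁻¹) (-r) :=
  mpow_inv (warith_posDef ht hA.inv hB.inv) r

theorem stmt_19_general {t r : ℝ} (ht : t ∈ Set.Icc 0 1) (hr : r ∈ Set.Icc (-1) 0)
    (hA : A.PosDef) (hB : B.PosDef) :
    MLE (warith t (mpow A r) (mpow B r)) (mpow (wharm t A B) r) := by
  have hneg : -r ∈ Set.Icc (0 : ℝ) 1 := ⟨neg_nonneg.2 hr.2, neg_le.1 hr.1⟩
  have hconcave :=
    warith_mpow_le_mpow_warith ht hneg hA.inv.posSemidef hB.inv.posSemidef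
  rwa [← mpow_wharm ht hA hB, mpow_inv hA, mpow_inv hB, neg_neg] at hconcave

end

theorem stmt_19 (n : ℕ) (A B : Matrix (Fin n) (Fin n) ℂ)
    (hA : A.PosDef) (hB : B.PosDef) (r : ℝ) (hr : r ∈ Set.Icc (-1:ℝ) 0) :
    MLE ((2⁻¹ : ℝ) • (mpow A r + mpow B r)) (mpow (wharm 2⁻¹ A B) r) := by
  have hmean := stmt_19_general (t := 2⁻¹) (by norm_num) hr hA hB
  rwa [warith, show (1 - 2⁻¹ : ℝ) = 2⁻¹ by norm_num, ← smul_add] at hmean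
end
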